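/- Let Φ be a measurable function on ℝ^n and A(y) a measurable n×n-matrix-valued function with A(y) invertible for a.e. y in the support of Φ, satisfying ∫_{ℝ^n} |det A(y)|^{-1} (1 + ‖A(y)‖²) |Φ(y)| dy < ∞. Then for every f ∈ W^{2,1}(ℝ^n), the matrix of second-order weak partial derivatives of H_{Φ,A} f satisfies, for a.e. x, (∂_{ij} H_{Φ,A} f(x))_{n×n} = ∫_{ℝ^n} Φ(y) A(y)^T · (∂_{ij} f(A(y)x))_{n×n} · A(y) dy, where ∂_{ij} denotes ∂²/∂x_i∂x_j taken in the weak sense. -/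

import Mathlib

open MeasureTheory

noncomputable section

/-- Action of an `n × n` matrix on a vector of `ℝⁿ` (Euclidean space). -/
def matVec {n : ℕ} (M : Matrix (Fin n) (Fin n) ℝ) (x : EuclideanSpace ℝ (Fin n)) :
    EuclideanSpace ℝ (Fin n) :=
  (WithLp.equiv 2 (Fin n → ℝ)).symm (M.mulVec (WithLp.equiv 2 (Fin n → ℝ) x))

/-- Hilbert–Schmidt (Frobenius) norm of a matrix. -/
def frobNorm {n : ℕ} (M : Matrix (Fin n) (Fin n) ℝ) : ℝ :=
  Real.sqrt (∑ i, ∑ j, (M i j) ^ 2)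

/-- Classical partial derivative `∂/∂xᵢ`. -/
def pderiv1 {n : ℕ} (i : Fin n) (f : EuclideanSpace ℝ (Fin n) → ℝ) :
    EuclideanSpace ℝ (Fin n) → ℝ :=
  fun x => fderiv ℝ f x (EuclideanSpace.single i 1)

/-- Classical multi-index derivative `D^α = ∂^{α₁}_{x₁} ⋯ ∂^{αₙ}_{xₙ}`. -/
def mderiv {n : ℕ} (α : Fin n → ℕ) (f : EuclideanSpace ℝ (Fin n) → ℝ) :
    EuclideanSpace ℝ (Fin n) → ℝ :=
  (List.finRange n).foldr (fun i g => (pderiv1 i)^[α i] g) f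

/-- `g` is the weak derivative of order `α` of `f`:
`∫ f · D^α φ = (−1)^{|α|} ∫ g · φ` for all test functions `φ ∈ C_c^∞`. -/
def IsWeakDeriv {n : ℕ} (α : Fin n → ℕ) (f g : EuclideanSpace ℝ (Fin n) → ℝ) : Prop :=
  ∀ φ : EuclideanSpace ℝ (Fin n) → ℝ, ContDiff ℝ (⊤ : ℕ∞) φ → HasCompactSupport φ →
    ∫ x, f x * mderiv α φ x = (-1 : ℝ) ^ (∑ i, α i) * ∫ x, g x * φ x

/-- `D` is a family of integrable weak derivatives of `f` for all multi-indices `|α| ≤ k`;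
this expresses `f ∈ W^{k,1}(ℝⁿ)` together with a choice of its weak derivatives. -/
def HasSobolevDerivs {n : ℕ} (k : ℕ) (f : EuclideanSpace ℝ (Fin n) → ℝ)
    (D : (Fin n → ℕ) → EuclideanSpace ℝ (Fin n) → ℝ) : Prop :=
  D 0 = f ∧ ∀ α : Fin n → ℕ, (∑ i, α i) ≤ k → Integrable (D α) ∧ IsWeakDeriv α f (D α)

/-- The Sobolev norm `‖f‖_{W^{k,1}} = Σ_{|α| ≤ k} ‖D^α f‖_{L¹}`, computed from a family `D`
of weak derivatives. -/
def sobolevNorm {n : ℕ} (k : ℕ) (D : (Fin n → ℕ) → EuclideanSpace ℝ (Fin n) → ℝ) : ℝ :=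
  ∑ α ∈ (Fintype.piFinset fun _ : Fin n => Finset.range (k + 1)).filter
      (fun α => ∑ i, α i ≤ k), ∫ x, |D α x|

/-- The generalized Hausdorff operator `H_{Φ,A} f (x) = ∫ Φ(y) f(A(y)x) dy`. -/
def hausdorffOp {n : ℕ} (Φ : EuclideanSpace ℝ (Fin n) → ℝ)
    (A : EuclideanSpace ℝ (Fin n) → Matrix (Fin n) (Fin n) ℝ)
    (f : EuclideanSpace ℝ (Fin n) → ℝ) : EuclideanSpace ℝ (Fin n) → ℝ :=
  fun x => ∫ y, Φ y * f (matVec (A y) x)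

section Helpers

variable {n : ℕ}

/-- `matVec M` as a continuous linear map. -/
def matL (M : Matrix (Fin n) (Fin n) ℝ) : EuclideanSpace ℝ (Fin n) →L[ℝ] EuclideanSpace ℝ (Fin n) :=
  LinearMap.toContinuousLinearMap (Matrix.toLpLin 2 2 M)

lemma matVec_eq (M : Matrix (Fin n) (Fin n) ℝ) : matVec M = matL M := rfl

lemma map_matVec (M : Matrix (Fin n) (Fin n) ℝ) (hM : M.det ≠ 0) :
    Measure.map (matVec M) (volume : Measure (EuclideanSpace ℝ (Fin n))) =
      ENNReal.ofReal |M.det|⁻¹ • volume := by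
  have h := Measure.map_linearMap_addHaar_eq_smul_addHaar
    (volume : Measure (EuclideanSpace ℝ (Fin n))) (f := Matrix.toLpLin 2 2 M)
    (by rw [LinearMap.det_toLpLin]; exact hM)
  rw [LinearMap.det_toLpLin, abs_inv] at h
  exact h

lemma measurable_matVec (M : Matrix (Fin n) (Fin n) ℝ) : Measurable (matVec M) := by
  rw [matVec_eq]; exact (matL M).continuous.measurable

lemma integrable_comp_matVec (M : Matrix (Fin n) (Fin n) ℝ) (hM : M.det ≠ 0)
    {g : EuclideanSpace ℝ (Fin n) → ℝ} (hg : Integrable g) :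
    Integrable (fun x => g (matVec M x)) := by
  have : Integrable g (Measure.map (matVec M) volume) := by
    rw [map_matVec M hM]; exact hg.smul_measure (by simp)
  exact this.comp_aemeasurable (measurable_matVec M).aemeasurable

lemma integral_comp_matVec (M : Matrix (Fin n) (Fin n) ℝ) (hM : M.det ≠ 0)
    {g : EuclideanSpace ℝ (Fin n) → ℝ} (hg : Integrable g) :
    ∫ x, g (matVec M x) = |M.det|⁻¹ * ∫ x, g x := by
  have : Integrable g (Measure.map (matVec M) volume) := by
    rw [map_matVec M hM]; exact hg.smul_measure (by simp)
  rw [← integral_map (measurable_matVec M).aemeasurable this.aestronglyMeasurable,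
    map_matVec M hM, integral_smul_measure, ENNReal.toReal_ofReal (by positivity), smul_eq_mul]

lemma pderiv1_contDiff (i : Fin n) {g : EuclideanSpace ℝ (Fin n) → ℝ}
    (hg : ContDiff ℝ (⊤ : ℕ∞) g) : ContDiff ℝ (⊤ : ℕ∞) (pderiv1 i g) := by
  unfold pderiv1
  exact (hg.fderiv_right (m := (⊤ : ℕ∞)) (by simp)).clm_apply contDiff_const

lemma pderiv1_hcs (i : Fin n) {g : EuclideanSpace ℝ (Fin n) → ℝ}
    (hg : HasCompactSupport g) : HasCompactSupport (pderiv1 i g) :=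
  hg.fderiv_apply ℝ _

lemma pderiv1_comm (i j : Fin n) {g : EuclideanSpace ℝ (Fin n) → ℝ}
    (hg : ContDiff ℝ (⊤ : ℕ∞) g) : pderiv1 i (pderiv1 j g) = pderiv1 j (pderiv1 i g) := by
  have hd : Differentiable ℝ (fderiv ℝ g) :=
    (hg.fderiv_right (m := (⊤ : ℕ∞)) (by simp)).differentiable (by simp)
  have key : ∀ (i j : Fin n) x, pderiv1 i (pderiv1 j g) x =
      fderiv ℝ (fderiv ℝ g) x (EuclideanSpace.single i 1) (EuclideanSpace.single j 1) := by
    intro i j x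
    unfold pderiv1
    rw [fderiv_clm_apply (hd x) (differentiableAt_const _)]
    simp
  funext x
  rw [key, key]
  exact (hg.contDiffAt.isSymmSndFDerivAt (by simp only [minSmoothness_of_isRCLikeNormedField]; exact WithTop.coe_le_coe.2 le_top)).eq _ _

lemma iter_contDiff (i : Fin n) (m : ℕ) {g : EuclideanSpace ℝ (Fin n) → ℝ}
    (hg : ContDiff ℝ (⊤ : ℕ∞) g) : ContDiff ℝ (⊤ : ℕ∞) ((pderiv1 i)^[m] g) := by
  induction m with
  | zero => exact hg
  | succ m ih => rw [Function.iterate_succ_apply']; exact pderiv1_contDiff i ih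

lemma pderiv1_iter_comm (i j : Fin n) (m : ℕ) {g : EuclideanSpace ℝ (Fin n) → ℝ}
    (hg : ContDiff ℝ (⊤ : ℕ∞) g) : pderiv1 i ((pderiv1 j)^[m] g) = (pderiv1 j)^[m] (pderiv1 i g) := by
  induction m with
  | zero => rfl
  | succ m ih =>
    rw [Function.iterate_succ_apply', Function.iterate_succ_apply',
      pderiv1_comm i j (iter_contDiff j m hg), ih]

/-- The fold defining `mderiv`, over an arbitrary list. -/
def fld (l : List (Fin n)) (α : Fin n → ℕ) (f : EuclideanSpace ℝ (Fin n) → ℝ) :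
    EuclideanSpace ℝ (Fin n) → ℝ :=
  l.foldr (fun i g => (pderiv1 i)^[α i] g) f

lemma fld_contDiff (l : List (Fin n)) (α : Fin n → ℕ) {g : EuclideanSpace ℝ (Fin n) → ℝ}
    (hg : ContDiff ℝ (⊤ : ℕ∞) g) : ContDiff ℝ (⊤ : ℕ∞) (fld l α g) := by
  induction l with
  | nil => exact hg
  | cons a l ih => exact iter_contDiff a _ ih

lemma pderiv1_fld (i : Fin n) (l : List (Fin n)) (α : Fin n → ℕ)
    {g : EuclideanSpace ℝ (Fin n) → ℝ}
    (hg : ContDiff ℝ (⊤ : ℕ∞) g) : pderiv1 i (fld l α g) = fld l α (pderiv1 i g) := by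
  induction l with
  | nil => rfl
  | cons a l ih =>
    change pderiv1 i ((pderiv1 a)^[α a] (fld l α g)) = (pderiv1 a)^[α a] (fld l α (pderiv1 i g))
    rw [pderiv1_iter_comm i a _ (fld_contDiff l α hg), ih]

lemma fld_add_not_mem (i : Fin n) (l : List (Fin n)) (hi : i ∉ l) (α : Fin n → ℕ)
    (g : EuclideanSpace ℝ (Fin n) → ℝ) : fld l (Pi.single i 1 + α) g = fld l α g := by
  induction l with
  | nil => rfl
  | cons a l ih =>
    have h1 : a ≠ i := fun h => hi (by simp [h])
    change (pderiv1 a)^[(Pi.single i 1 + α : Fin n → ℕ) a] (fld l (Pi.single i 1 + α) g) =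
      (pderiv1 a)^[α a] (fld l α g)
    rw [ih (fun h => hi (by simp [h]))]
    simp [h1]

lemma fld_add_mem (i : Fin n) (l : List (Fin n)) (hl : l.Nodup) (hi : i ∈ l) (α : Fin n → ℕ)
    {g : EuclideanSpace ℝ (Fin n) → ℝ} (hg : ContDiff ℝ (⊤ : ℕ∞) g) :
    fld l (Pi.single i 1 + α) g = pderiv1 i (fld l α g) := by
  induction l with
  | nil => simp at hi
  | cons a l ih =>
    rw [List.nodup_cons] at hl
    change (pderiv1 a)^[(Pi.single i 1 + α : Fin n → ℕ) a] (fld l (Pi.single i 1 + α) g) =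
      pderiv1 i ((pderiv1 a)^[α a] (fld l α g))
    by_cases h : a = i
    · subst h
      rw [fld_add_not_mem a l hl.1]
      simp only [Pi.add_apply, Pi.single_eq_same]
      rw [add_comm, Function.iterate_succ_apply']
    · have h2 : i ∈ l := by
        rcases List.mem_cons.1 hi with h' | h'
        · exact absurd h'.symm h
        · exact h'
      rw [ih hl.2 h2]
      simp only [Pi.add_apply, Pi.single_eq_of_ne h, zero_add]
      rw [pderiv1_iter_comm i a _ (fld_contDiff l α hg)]

lemma fld_zero (l : List (Fin n)) (g : EuclideanSpace ℝ (Fin n) → ℝ) : fld l 0 g = g := by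
  induction l with
  | nil => rfl
  | cons a l ih => exact ih

lemma mderiv_two (i j : Fin n) {g : EuclideanSpace ℝ (Fin n) → ℝ}
    (hg : ContDiff ℝ (⊤ : ℕ∞) g) :
    mderiv (Pi.single i 1 + Pi.single j 1) g = pderiv1 i (pderiv1 j g) := by
  change fld (List.finRange n) _ g = _
  rw [fld_add_mem i _ (List.nodup_finRange n) (List.mem_finRange i) _ hg,
    ← add_zero (Pi.single j 1 : Fin n → ℕ),
    fld_add_mem j _ (List.nodup_finRange n) (List.mem_finRange j) _ hg, fld_zero]

lemma matL_single (M : Matrix (Fin n) (Fin n) ℝ) (j : Fin n) :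
    matL M (EuclideanSpace.single j 1) = ∑ l, M l j • EuclideanSpace.single l (1 : ℝ) := by
  ext k
  change (M.mulVec (Pi.single j 1)) k = _
  simp [Finset.sum_apply, Pi.single_apply]

lemma pderiv1_comp (M : Matrix (Fin n) (Fin n) ℝ) (j : Fin n)
    {g : EuclideanSpace ℝ (Fin n) → ℝ} (hg : Differentiable ℝ g) :
    pderiv1 j (fun x => g (matVec M x)) = fun x => ∑ l, M l j * pderiv1 l g (matVec M x) := by
  funext x
  unfold pderiv1
  have h : HasFDerivAt (fun x => g (matVec M x)) ((fderiv ℝ g (matVec M x)).comp (matL M)) x :=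
    (hg (matVec M x)).hasFDerivAt.comp x ((matL M).hasFDerivAt)
  rw [h.fderiv, ContinuousLinearMap.comp_apply, matL_single]
  simp

lemma pderiv2_comp (M : Matrix (Fin n) (Fin n) ℝ) (i j : Fin n)
    {g : EuclideanSpace ℝ (Fin n) → ℝ} (hg : ContDiff ℝ (⊤ : ℕ∞) g) (x : EuclideanSpace ℝ (Fin n)) :
    pderiv1 i (pderiv1 j (fun x => g (matVec M x))) x =
      ∑ k, ∑ l, M k i * M l j * pderiv1 k (pderiv1 l g) (matVec M x) := by
  have hd : ∀ l, Differentiable ℝ (pderiv1 l g) := fun l =>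
    (pderiv1_contDiff l hg).differentiable (by simp)
  rw [pderiv1_comp M j (hg.differentiable (by simp))]
  have hdl : ∀ l, Differentiable ℝ (fun x => pderiv1 l g (matVec M x)) := fun l =>
    (hd l).comp (matL M).differentiable
  have : pderiv1 i (fun x => ∑ l, M l j * pderiv1 l g (matVec M x)) x =
      ∑ l, M l j * pderiv1 i (fun x => pderiv1 l g (matVec M x)) x := by
    change fderiv ℝ (fun x => ∑ l, M l j * pderiv1 l g (matVec M x)) x _ = _
    rw [fderiv_fun_sum (fun l _ => ((hdl l) x).const_mul _)]
    simp only [sum_apply]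
    refine Finset.sum_congr rfl fun l _ => ?_
    rw [fderiv_const_mul ((hdl l) x)]
    rfl
  rw [this, Finset.sum_comm]
  refine Finset.sum_congr rfl fun l _ => ?_
  rw [pderiv1_comp M i (hd l), Finset.mul_sum]
  refine Finset.sum_congr rfl fun k _ => ?_
  ring

lemma integrable_mul_test {g χ : EuclideanSpace ℝ (Fin n) → ℝ} (hg : Integrable g)
    (hχ : Continuous χ) (hc : HasCompactSupport χ) : Integrable (fun x => g x * χ x) := by
  obtain ⟨C, hC⟩ := hχ.bounded_above_of_compact_support hc
  exact hg.mul_bdd hχ.aestronglyMeasurable (Filter.Eventually.of_forall hC)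

lemma sum_two (k l : Fin n) :
    ∑ i, (Pi.single k 1 + Pi.single l 1 : Fin n → ℕ) i = 2 := by
  simp [Finset.sum_add_distrib]

lemma weak_fixed {f : EuclideanSpace ℝ (Fin n) → ℝ}
    {D : (Fin n → ℕ) → EuclideanSpace ℝ (Fin n) → ℝ} (hf : HasSobolevDerivs 2 f D)
    (M : Matrix (Fin n) (Fin n) ℝ) (hM : M.det ≠ 0) (i j : Fin n)
    {φ : EuclideanSpace ℝ (Fin n) → ℝ} (hφ : ContDiff ℝ (⊤ : ℕ∞) φ) (hc : HasCompactSupport φ) :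
    ∫ x, f (matVec M x) * mderiv (Pi.single i 1 + Pi.single j 1) φ x =
      ∫ x, (∑ k, ∑ l, M k i * D (Pi.single k 1 + Pi.single l 1) (matVec M x) * M l j) * φ x := by
  have hfi : Integrable f := by
    have := (hf.2 0 (by simp)).1
    rwa [hf.1] at this
  have hinv1 : ∀ x, matVec M⁻¹ (matVec M x) = x := by
    intro x
    simp [matVec, Matrix.nonsing_inv_mul M (isUnit_iff_ne_zero.2 hM)]
  have hinv2 : ∀ x, matVec M (matVec M⁻¹ x) = x := by
    intro x
    simp [matVec, Matrix.mul_nonsing_inv M (isUnit_iff_ne_zero.2 hM)]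
  obtain ⟨ψ, hψd⟩ : ∃ ψ : EuclideanSpace ℝ (Fin n) → ℝ, ψ = fun x => φ (matVec M⁻¹ x) := ⟨_, rfl⟩
  have hψ : ContDiff ℝ (⊤ : ℕ∞) ψ := by
    rw [hψd]; exact hφ.comp (matL M⁻¹).contDiff
  have hψc : HasCompactSupport ψ := by
    let e : EuclideanSpace ℝ (Fin n) ≃ₜ EuclideanSpace ℝ (Fin n) :=
      { toFun := matVec M⁻¹, invFun := matVec M, left_inv := hinv2, right_inv := hinv1
        continuous_toFun := (matL M⁻¹).continuous
        continuous_invFun := (matL M).continuous }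
    rw [hψd]; exact hc.comp_homeomorph e
  have hφψ : φ = fun x => ψ (matVec M x) := by
    funext x; simp [hψd, hinv1]
  have h2c : ∀ k l, ContDiff ℝ (⊤ : ℕ∞) (pderiv1 k (pderiv1 l ψ)) := fun k l =>
    pderiv1_contDiff k (pderiv1_contDiff l hψ)
  have I1 : ∀ k l, Integrable (fun x => f x * pderiv1 k (pderiv1 l ψ) x) := fun k l =>
    integrable_mul_test hfi (h2c k l).continuous (pderiv1_hcs k (pderiv1_hcs l hψc))
  have I2 : ∀ k l, Integrable (fun x => D (Pi.single k 1 + Pi.single l 1) x * ψ x) := fun k l =>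
    integrable_mul_test (hf.2 _ (sum_two k l).le).1 hψ.continuous hψc
  have hw : ∀ k l, ∫ x, f x * pderiv1 k (pderiv1 l ψ) x =
      ∫ x, D (Pi.single k 1 + Pi.single l 1) x * ψ x := by
    intro k l
    have := (hf.2 _ (sum_two k l).le).2 ψ hψ hψc
    rw [mderiv_two k l hψ, sum_two] at this
    simpa using this
  have e1 : ∀ x, f (matVec M x) * mderiv (Pi.single i 1 + Pi.single j 1) φ x =
      ∑ k, ∑ l, M k i * M l j *
        (fun x => f x * pderiv1 k (pderiv1 l ψ) x) (matVec M x) := by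
    intro x
    rw [mderiv_two i j hφ, hφψ, pderiv2_comp M i j hψ, Finset.mul_sum]
    refine Finset.sum_congr rfl fun k _ => ?_
    rw [Finset.mul_sum]
    refine Finset.sum_congr rfl fun l _ => ?_
    ring
  have e2 : ∀ x, (∑ k, ∑ l, M k i * D (Pi.single k 1 + Pi.single l 1) (matVec M x) * M l j) * φ x =
      ∑ k, ∑ l, M k i * M l j *
        (fun x => D (Pi.single k 1 + Pi.single l 1) x * ψ x) (matVec M x) := by
    intro x
    rw [hφψ, Finset.sum_mul]
    refine Finset.sum_congr rfl fun k _ => ?_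
    rw [Finset.sum_mul]
    refine Finset.sum_congr rfl fun l _ => ?_
    ring
  simp_rw [e1, e2]
  have gen : ∀ G : Fin n → Fin n → EuclideanSpace ℝ (Fin n) → ℝ, (∀ k l, Integrable (G k l)) →
      ∫ x, ∑ k, ∑ l, M k i * M l j * G k l (matVec M x) =
        ∑ k, ∑ l, M k i * M l j * (|M.det|⁻¹ * ∫ x, G k l x) := by
    intro G hG
    have h1 : ∀ k l, Integrable (fun x => M k i * M l j * G k l (matVec M x)) := fun k l =>
      (integrable_comp_matVec M hM (hG k l)).const_mul _
    rw [integral_finsetSum _ (fun k _ => integrable_finsetSum _ (fun l _ => h1 k l))]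
    refine Finset.sum_congr rfl fun k _ => ?_
    rw [integral_finsetSum _ (fun l _ => h1 k l)]
    refine Finset.sum_congr rfl fun l _ => ?_
    rw [integral_const_mul, integral_comp_matVec M hM (hG k l)]
  rw [gen (fun k l x => f x * pderiv1 k (pderiv1 l ψ) x) I1,
    gen (fun k l x => D (Pi.single k 1 + Pi.single l 1) x * ψ x) I2]
  simp_rw [hw]

lemma measurable_matVec_joint {A : EuclideanSpace ℝ (Fin n) → Matrix (Fin n) (Fin n) ℝ}
    (hA : ∀ i j, Measurable fun y => A y i j) :
    Measurable (fun p : EuclideanSpace ℝ (Fin n) × EuclideanSpace ℝ (Fin n) =>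
      matVec (A p.2) p.1) := by
  have : Measurable (fun p : EuclideanSpace ℝ (Fin n) × EuclideanSpace ℝ (Fin n) =>
      (A p.2).mulVec (WithLp.equiv 2 (Fin n → ℝ) p.1)) := by
    refine measurable_pi_lambda _ fun i => ?_
    simp only [Matrix.mulVec, dotProduct]
    refine Finset.measurable_sum _ fun k _ => ?_
    refine ((hA i k).comp measurable_snd).mul ?_
    exact (EuclideanSpace.proj (𝕜 := ℝ) k).continuous.measurable.comp measurable_fst
  exact (WithLp.measurable_toLp 2 _).comp this

lemma joint_integrable {A : EuclideanSpace ℝ (Fin n) → Matrix (Fin n) (Fin n) ℝ}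
    (hA : ∀ i j, Measurable fun y => A y i j)
    {c : EuclideanSpace ℝ (Fin n) → ℝ} (hcm : Measurable c)
    (hinv : ∀ᵐ y : EuclideanSpace ℝ (Fin n), c y ≠ 0 → (A y).det ≠ 0)
    (hint : Integrable (fun y => |(A y).det|⁻¹ * |c y|))
    {g : EuclideanSpace ℝ (Fin n) → ℝ} (hg : Integrable g)
    {χ : EuclideanSpace ℝ (Fin n) → ℝ} (hχ : Continuous χ) (hχc : HasCompactSupport χ) :
    Integrable (fun p : EuclideanSpace ℝ (Fin n) × EuclideanSpace ℝ (Fin n) =>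
      c p.2 * g (matVec (A p.2) p.1) * χ p.1) (volume.prod volume) := by
  have hJ := measurable_matVec_joint hA
  have hmeas : AEStronglyMeasurable
      (fun p : EuclideanSpace ℝ (Fin n) × EuclideanSpace ℝ (Fin n) =>
        c p.2 * g (matVec (A p.2) p.1)) (volume.prod volume) := by
    obtain ⟨g', hg', hgg'⟩ := hg.aestronglyMeasurable
    refine ⟨fun p => c p.2 * g' (matVec (A p.2) p.1),
      ((hcm.comp measurable_snd).mul (hg'.measurable.comp hJ)).stronglyMeasurable, ?_⟩
    let N := toMeasurable volume {x | g x ≠ g' x}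
    have hN0 : volume N = 0 := by
      rw [measure_toMeasurable]; exact hgg'
    have hNm : MeasurableSet N := measurableSet_toMeasurable _ _
    let S : Set (EuclideanSpace ℝ (Fin n) × EuclideanSpace ℝ (Fin n)) :=
      {p | c p.2 ≠ 0} ∩ (fun p => matVec (A p.2) p.1) ⁻¹' N
    have hSm : MeasurableSet S :=
      ((hcm.comp measurable_snd) (measurableSet_singleton 0).compl).inter (hJ hNm)
    have hS0 : (volume.prod volume) S = 0 := by
      rw [Measure.prod_apply_symm hSm, lintegral_eq_zero_iff (measurable_measure_prodMk_right hSm)]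
      filter_upwards [hinv] with y hy
      by_cases h0 : c y = 0
      · simp [S, h0]
      · have hsub : (fun x => (x, y)) ⁻¹' S ⊆ matVec (A y) ⁻¹' N := fun x hx => hx.2
        refine measure_mono_null hsub ?_
        rw [← Measure.map_apply (measurable_matVec _) hNm, map_matVec _ (hy h0)]
        simp [hN0]
    refine measure_mono_null ?_ hS0
    intro p hp
    have hp' : ¬ (c p.2 * g (matVec (A p.2) p.1) = c p.2 * g' (matVec (A p.2) p.1)) := hp
    refine ⟨fun h => hp' (by simp [h]), subset_toMeasurable _ _ ?_⟩
    intro h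
    exact hp' (by rw [h])
  obtain ⟨C, hC⟩ := hχ.bounded_above_of_compact_support hχc
  refine Integrable.mul_bdd (c := C) ?_
    (hχ.comp continuous_fst).aestronglyMeasurable (Filter.Eventually.of_forall fun p => hC p.1)
  rw [integrable_prod_iff' hmeas]
  constructor
  · filter_upwards [hinv] with y hy
    by_cases h0 : c y = 0
    · simp [h0]
    · exact (integrable_comp_matVec _ (hy h0) hg).const_mul _
  · refine (hint.mul_const (∫ x, ‖g x‖)).congr ?_
    filter_upwards [hinv] with y hy
    by_cases h0 : c y = 0
    · simp [h0]
    · simp only [norm_mul]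
      rw [integral_const_mul, integral_comp_matVec _ (hy h0) hg.norm]
      simp only [Real.norm_eq_abs]
      ring

lemma abs_entry_le (M : Matrix (Fin n) (Fin n) ℝ) (k i : Fin n) : |M k i| ≤ frobNorm M := by
  refine Real.abs_le_sqrt ?_
  calc M k i ^ 2 ≤ ∑ j, M k j ^ 2 :=
        Finset.single_le_sum (f := fun j => M k j ^ 2) (fun _ _ => sq_nonneg _) (Finset.mem_univ i)
    _ ≤ _ := Finset.single_le_sum (f := fun k => ∑ j, M k j ^ 2)
        (fun _ _ => Finset.sum_nonneg fun _ _ => sq_nonneg _) (Finset.mem_univ k)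

lemma measurable_det {A : EuclideanSpace ℝ (Fin n) → Matrix (Fin n) (Fin n) ℝ}
    (hA : ∀ i j, Measurable fun y => A y i j) : Measurable fun y => (A y).det := by
  simp only [Matrix.det_apply']
  exact Finset.measurable_sum _ fun σ _ =>
    (Finset.measurable_prod _ fun i _ => hA _ _).const_mul _

end Helpers

/-- Under the integrability condition with `k = 2`, for `f ∈ W^{2,1}(ℝⁿ)` with
weak-derivative family `D`, the matrix of second-order weak derivatives of `H_{Φ,A} f` is
`(∂_{ij} H_{Φ,A}f(x)) = ∫ Φ(y) A(y)ᵀ · (∂_{kl}f(A(y)x)) · A(y) dy`, i.e. its `(i,j)` entry is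
`x ↦ ∫ Φ(y) Σ_k Σ_l a_{ki}(y) (∂_k ∂_l f)(A(y)x) a_{lj}(y) dy`. -/
theorem weakHessian_hausdorffOp (n : ℕ)
    (Φ : EuclideanSpace ℝ (Fin n) → ℝ)
    (A : EuclideanSpace ℝ (Fin n) → Matrix (Fin n) (Fin n) ℝ)
    (hΦ : Measurable Φ) (hA : ∀ i j, Measurable fun y => A y i j)
    (hinv : ∀ᵐ y : EuclideanSpace ℝ (Fin n), Φ y ≠ 0 → (A y).det ≠ 0)
    (hint : Integrable
      (fun y => |(A y).det|⁻¹ * (1 + frobNorm (A y) ^ 2) * |Φ y|))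
    (f : EuclideanSpace ℝ (Fin n) → ℝ)
    (D : (Fin n → ℕ) → EuclideanSpace ℝ (Fin n) → ℝ)
    (hf : HasSobolevDerivs 2 f D)
    (i j : Fin n) :
    IsWeakDeriv (Pi.single i 1 + Pi.single j 1) (hausdorffOp Φ A f)
      (fun x => ∫ y, Φ y *
        ∑ k : Fin n, ∑ l : Fin n,
          A y k i * D (Pi.single k 1 + Pi.single l 1) (matVec (A y) x) * A y l j) := by
  intro φ hφ hc
  rw [sum_two]
  have hfi : Integrable f := by
    have := (hf.2 0 (by simp)).1
    rwa [hf.1] at this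
  obtain ⟨m, hm⟩ : ∃ m, m = mderiv (Pi.single i 1 + Pi.single j 1) φ := ⟨_, rfl⟩
  have hmc : Continuous m := by
    rw [hm, mderiv_two i j hφ]
    exact (pderiv1_contDiff i (pderiv1_contDiff j hφ)).continuous
  have hms : HasCompactSupport m := by
    rw [hm, mderiv_two i j hφ]
    exact pderiv1_hcs i (pderiv1_hcs j hc)
  have hdet := measurable_det hA
  have J1 : Integrable (fun p : EuclideanSpace ℝ (Fin n) × EuclideanSpace ℝ (Fin n) =>
      Φ p.2 * f (matVec (A p.2) p.1) * m p.1) (volume.prod volume) := by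
    refine joint_integrable hA hΦ hinv ?_ hfi hmc hms
    refine hint.mono ((hdet.abs.inv.mul hΦ.abs).aestronglyMeasurable)
      (Filter.Eventually.of_forall fun y => ?_)
    rw [Real.norm_of_nonneg (by positivity), Real.norm_of_nonneg (by positivity)]
    refine mul_le_mul_of_nonneg_right ?_ (abs_nonneg _)
    refine le_mul_of_one_le_right (by positivity) ?_
    nlinarith [sq_nonneg (frobNorm (A y))]
  have J2 : Integrable (fun p : EuclideanSpace ℝ (Fin n) × EuclideanSpace ℝ (Fin n) =>
      (Φ p.2 * ∑ k, ∑ l, A p.2 k i * D (Pi.single k 1 + Pi.single l 1) (matVec (A p.2) p.1)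
        * A p.2 l j) * φ p.1) (volume.prod volume) := by
    have hs : Integrable (fun p : EuclideanSpace ℝ (Fin n) × EuclideanSpace ℝ (Fin n) =>
        ∑ k, ∑ l, (fun y => Φ y * A y k i * A y l j) p.2 *
          D (Pi.single k 1 + Pi.single l 1) (matVec (A p.2) p.1) * φ p.1)
          (volume.prod volume) := by
      refine integrable_finsetSum _ fun k _ => integrable_finsetSum _ fun l _ => ?_
      have hcm : Measurable (fun y => Φ y * A y k i * A y l j) :=
        (hΦ.mul (hA k i)).mul (hA l j)
      refine joint_integrable (c := fun y => Φ y * A y k i * A y l j) hA hcm ?_ ?_ (hf.2 _ (sum_two k l).le).1 hφ.continuous hc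
      · filter_upwards [hinv] with y hy h
        exact hy fun h0 => h (by simp [h0])
      · refine hint.mono ((hdet.abs.inv.mul hcm.abs).aestronglyMeasurable)
          (Filter.Eventually.of_forall fun y => ?_)
        rw [Real.norm_of_nonneg (by positivity), Real.norm_of_nonneg (by positivity)]
        have h1 := mul_le_mul (abs_entry_le (A y) k i) (abs_entry_le (A y) l j) (abs_nonneg _)
          ((abs_nonneg _).trans (abs_entry_le (A y) k i))
        have h2 : |A y k i| * |A y l j| ≤ 1 + frobNorm (A y) ^ 2 := by nlinarith
        calc |(A y).det|⁻¹ * |Φ y * A y k i * A y l j|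
            = |(A y).det|⁻¹ * (|A y k i| * |A y l j|) * |Φ y| := by
              rw [abs_mul, abs_mul]; ring
          _ ≤ |(A y).det|⁻¹ * (1 + frobNorm (A y) ^ 2) * |Φ y| :=
              mul_le_mul_of_nonneg_right (mul_le_mul_of_nonneg_left h2 (by positivity))
                (abs_nonneg _)
    refine hs.congr (Filter.Eventually.of_forall fun p => ?_)
    simp only [Finset.mul_sum, Finset.sum_mul]
    refine Finset.sum_congr rfl fun k _ => Finset.sum_congr rfl fun l _ => ?_
    ring
  have S1 : ∫ x, ∫ y, Φ y * f (matVec (A y) x) * m x =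
      ∫ y, ∫ x, Φ y * f (matVec (A y) x) * m x := integral_integral_swap J1
  have S2 : ∫ x, ∫ y, (Φ y * ∑ k, ∑ l, A y k i *
      D (Pi.single k 1 + Pi.single l 1) (matVec (A y) x) * A y l j) * φ x =
      ∫ y, ∫ x, (Φ y * ∑ k, ∑ l, A y k i *
      D (Pi.single k 1 + Pi.single l 1) (matVec (A y) x) * A y l j) * φ x :=
    integral_integral_swap J2
  have L1 : ∫ x, hausdorffOp Φ A f x * m x = ∫ x, ∫ y, Φ y * f (matVec (A y) x) * m x := by
    refine integral_congr_ae (Filter.Eventually.of_forall fun x => ?_)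
    exact (integral_mul_const (m x) fun y => Φ y * f (matVec (A y) x)).symm
  have L2 : ∫ x, (∫ y, Φ y * ∑ k, ∑ l, A y k i *
      D (Pi.single k 1 + Pi.single l 1) (matVec (A y) x) * A y l j) * φ x =
      ∫ x, ∫ y, (Φ y * ∑ k, ∑ l, A y k i *
      D (Pi.single k 1 + Pi.single l 1) (matVec (A y) x) * A y l j) * φ x := by
    refine integral_congr_ae (Filter.Eventually.of_forall fun x => ?_)
    exact (integral_mul_const (φ x) fun y => Φ y * ∑ k, ∑ l, A y k i *
      D (Pi.single k 1 + Pi.single l 1) (matVec (A y) x) * A y l j).symm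
  have S3 : ∫ y, ∫ x, Φ y * f (matVec (A y) x) * m x = ∫ y, ∫ x, (Φ y * ∑ k, ∑ l, A y k i *
      D (Pi.single k 1 + Pi.single l 1) (matVec (A y) x) * A y l j) * φ x := by
    refine integral_congr_ae ?_
    filter_upwards [hinv] with y hy
    by_cases h0 : Φ y = 0
    · simp [h0]
    · simp only [mul_assoc (Φ y)]
      rw [integral_const_mul, integral_const_mul, hm, weak_fixed hf (A y) (hy h0) i j hφ hc]
  have hsgn : ∀ t : ℝ, (-1 : ℝ) ^ 2 * t = t := fun t => by norm_num
  rw [← hm, hsgn]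
  exact L1.trans (S1.trans (S3.trans (S2.symm.trans L2.symm)))

end
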